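/- Let 1 < p < ∞ and let q satisfy 1/p + 1/q = 1. Let x₁, x₂ ∈ L^p[0,1] be linearly independent. Then the volume of the 2-rectangle spanned by x₁ and x₂ satisfies V(x₁,x₂) = ‖x₁‖_p · ‖x₂ − (g(x₁,x₂)/‖x₁‖_p²) x₁‖_p ≤ ‖x₁,x₂‖_p^G. -/

import Mathlib

/-!
The equality of the two expressions for the volume is the identity `g(x₁,x₁) = ‖x₁‖²`
(`gsip_self`), valid because `‖x₁‖ ≠ 0` by linear independence.

For the inequality, the supremum is bounded below by one good pair of test functions. With the
duality map `J x = |x|^(p-1) sgn x`, the normalised function `y = J x / (∫ |x|^p)^(1/q)` satisfies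
`‖y‖_q ≤ 1` and `∫ x y = ‖x‖_p` (`pnorm_dualFun_le`, `integral_mul_dualFun`). Take `y₁`, `y₂` to be
the normalised duals of `x₁` and of `x₂° = x₂ - c x₁`. The determinant does not change when `x₂` is
replaced by `x₂°`, and `∫ x₂° y₁ = 0` by the choice of `c`, so it equals `‖x₁‖ ‖x₂°‖`.
Since the supremum is taken in `ℝ`, one also needs the set of determinants to be bounded above,
which is Hölder's inequality (`bddAbove_gahlerSet`).
-/

open MeasureTheory

/-- The `L^p` norm on `[0,1]`: `‖x‖_p = (∫₀¹ |x(t)|^p dt)^(1/p)`. -/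
noncomputable def pnorm (p : ℝ) (x : ℝ → ℝ) : ℝ :=
  (∫ t in (0:ℝ)..1, |x t| ^ p) ^ (1 / p)

/-- `x ∈ L^p[0,1]`: `x` is measurable and `∫₀¹ |x(t)|^p dt < ∞`. -/
def MemLp01 (p : ℝ) (x : ℝ → ℝ) : Prop :=
  Measurable x ∧ IntervalIntegrable (fun t => |x t| ^ p) volume 0 1

/-- The set of values `|det (∫₀¹ xᵢ(u) yⱼ(u) du)ⱼᵢ|` over `y₁, y₂ ∈ L^q[0,1]` with
`‖y₁‖_q ≤ 1`, `‖y₂‖_q ≤ 1`; its supremum is the Gähler 2-norm `‖x₁,x₂‖_p^G`. -/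
noncomputable def GahlerSet (q : ℝ) (x₁ x₂ : ℝ → ℝ) : Set ℝ :=
  { r | ∃ y₁ y₂ : ℝ → ℝ, MemLp01 q y₁ ∧ MemLp01 q y₂ ∧
      pnorm q y₁ ≤ 1 ∧ pnorm q y₂ ≤ 1 ∧
      r = |(∫ u in (0:ℝ)..1, x₁ u * y₁ u) * (∫ u in (0:ℝ)..1, x₂ u * y₂ u) -
           (∫ u in (0:ℝ)..1, x₂ u * y₁ u) * (∫ u in (0:ℝ)..1, x₁ u * y₂ u)| }

/-- The Gähler 2-norm `‖x₁,x₂‖_p^G` on `L^p[0,1]` (where `1/p + 1/q = 1`). -/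
noncomputable def gahler (q : ℝ) (x₁ x₂ : ℝ → ℝ) : ℝ := sSup (GahlerSet q x₁ x₂)

/-- The semi-inner product `g(x,y) = ‖x‖_p^(2-p) ∫₀¹ |x(u)|^(p-1) sgn(x(u)) y(u) du`
on `L^p[0,1]`. -/
noncomputable def gsip (p : ℝ) (x y : ℝ → ℝ) : ℝ :=
  pnorm p x ^ (2 - p) * ∫ u in (0:ℝ)..1, |x u| ^ (p - 1) * Real.sign (x u) * y u

/-- The volume `V(x₁,x₂) = ‖x₁°‖_p ‖x₂°‖_p` of the 2-rectangle spanned by `x₁, x₂`,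
where `x₁° = x₁` and `x₂° = x₂ − (g(x₁°,x₂)/g(x₁°,x₁°)) x₁°`. -/
noncomputable def Vvol (p : ℝ) (x₁ x₂ : ℝ → ℝ) : ℝ :=
  pnorm p x₁ * pnorm p (fun t => x₂ t - (gsip p x₁ x₂ / gsip p x₁ x₁) * x₁ t)

/-- The duality map `J x = |x|^(p-1) sgn x`, sending `L^p` to `L^q`. -/
noncomputable def dualMap (p : ℝ) (x : ℝ → ℝ) : ℝ → ℝ :=
  fun u => |x u| ^ (p - 1) * Real.sign (x u)

/-- The duality map normalised to the unit ball of `L^q`; it is `0` when `∫ |x|^p = 0`. -/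
noncomputable def dualFun (p q : ℝ) (x : ℝ → ℝ) : ℝ → ℝ :=
  fun u => dualMap p x u / (∫ t in (0:ℝ)..1, |x t| ^ p) ^ (1 / q)

theorem memLp_of_memLp01 {p : ℝ} (hp : 0 < p) {x : ℝ → ℝ} (h : MemLp01 p x) :
    MemLp x (ENNReal.ofReal p) (volume.restrict (Set.Ioc (0:ℝ) 1)) := by
  have h2 := (intervalIntegrable_iff_integrableOn_Ioc_of_le zero_le_one).1 h.2
  rw [← integrable_norm_rpow_iff h.1.aestronglyMeasurable (by simpa using hp) (by simp),
    ENNReal.toReal_ofReal hp.le]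
  exact h2

theorem memLp01_of_memLp {p : ℝ} (hp : 0 < p) {x : ℝ → ℝ} (hm : Measurable x)
    (h : MemLp x (ENNReal.ofReal p) (volume.restrict (Set.Ioc (0:ℝ) 1))) : MemLp01 p x := by
  refine ⟨hm, (intervalIntegrable_iff_integrableOn_Ioc_of_le zero_le_one).2 ?_⟩
  rw [← integrable_norm_rpow_iff h.1 (by simpa using hp) (by simp),
    ENNReal.toReal_ofReal hp.le] at h
  exact h

theorem intervalIntegrable_mul {p q : ℝ} (hpq : p.HolderConjugate q) {x y : ℝ → ℝ}
    (hx : MemLp01 p x) (hy : MemLp01 q y) :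
    IntervalIntegrable (fun u => x u * y u) volume 0 1 := by
  have := hpq.ennrealOfReal
  exact (intervalIntegrable_iff_integrableOn_Ioc_of_le zero_le_one).2
    ((memLp_of_memLp01 hpq.pos hx).integrable_mul (memLp_of_memLp01 hpq.symm.pos hy))

theorem integral_abs_rpow_nonneg (p : ℝ) (x : ℝ → ℝ) : 0 ≤ ∫ t in (0:ℝ)..1, |x t| ^ p :=
  intervalIntegral.integral_nonneg zero_le_one fun _ _ => Real.rpow_nonneg (abs_nonneg _) _

theorem pnorm_nonneg (p : ℝ) (x : ℝ → ℝ) : 0 ≤ pnorm p x :=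
  Real.rpow_nonneg (integral_abs_rpow_nonneg p x) _

/-- Hölder's inequality. -/
theorem abs_integral_mul_le {p q : ℝ} (hpq : p.HolderConjugate q) {x y : ℝ → ℝ}
    (hx : MemLp01 p x) (hy : MemLp01 q y) :
    |∫ u in (0:ℝ)..1, x u * y u| ≤ pnorm p x * pnorm q y := by
  have h := integral_mul_norm_le_Lp_mul_Lq hpq (memLp_of_memLp01 hpq.pos hx)
    (memLp_of_memLp01 hpq.symm.pos hy)
  unfold pnorm
  simp only [intervalIntegral.integral_of_le (zero_le_one' ℝ)]
  refine le_trans ?_ h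
  simpa only [norm_mul, Real.norm_eq_abs] using norm_integral_le_integral_norm
    (μ := volume.restrict (Set.Ioc (0:ℝ) 1)) fun u => x u * y u

theorem bddAbove_gahlerSet {p q : ℝ} (hpq : p.HolderConjugate q) {x₁ x₂ : ℝ → ℝ}
    (h₁ : MemLp01 p x₁) (h₂ : MemLp01 p x₂) : BddAbove (GahlerSet q x₁ x₂) := by
  refine ⟨pnorm p x₁ * pnorm p x₂ + pnorm p x₂ * pnorm p x₁, ?_⟩
  rintro r ⟨y₁, y₂, hy₁, hy₂, n₁, n₂, rfl⟩
  have key : ∀ {x y : ℝ → ℝ}, MemLp01 p x → MemLp01 q y → pnorm q y ≤ 1 →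
      |∫ u in (0:ℝ)..1, x u * y u| ≤ pnorm p x := fun {x y} hx hy n =>
    (abs_integral_mul_le hpq hx hy).trans (mul_le_of_le_one_right (pnorm_nonneg _ _) n)
  refine (abs_sub _ _).trans ?_
  rw [abs_mul, abs_mul]
  exact add_le_add
    (mul_le_mul (key h₁ hy₁ n₁) (key h₂ hy₂ n₂) (abs_nonneg _) (pnorm_nonneg _ _))
    (mul_le_mul (key h₂ hy₁ n₁) (key h₁ hy₂ n₂) (abs_nonneg _) (pnorm_nonneg _ _))

theorem measurable_dualMap (p : ℝ) {x : ℝ → ℝ} (hx : Measurable x) :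
    Measurable (dualMap p x) := by
  have hs : Measurable Real.sign :=
    Measurable.ite measurableSet_Iio measurable_const
      (Measurable.ite measurableSet_Ioi measurable_const measurable_const)
  have ha : Measurable fun u => |x u| := by simpa using hx.norm
  exact (ha.pow_const _).mul (hs.comp hx)

theorem abs_dualMap_rpow {p q : ℝ} (hpq : p.HolderConjugate q) (x : ℝ → ℝ) (u : ℝ) :
    |dualMap p x u| ^ q = |x u| ^ p := by
  unfold dualMap
  rcases eq_or_ne (x u) 0 with h | h
  · simp [h, Real.zero_rpow hpq.pos.ne', Real.zero_rpow hpq.symm.pos.ne']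
  · have hs : |Real.sign (x u)| = 1 := by
      rcases Real.sign_apply_eq_of_ne_zero (x u) h with h | h <;> simp [h]
    rw [abs_mul, hs, mul_one, abs_of_nonneg (Real.rpow_nonneg (abs_nonneg _) _),
      ← Real.rpow_mul (abs_nonneg _), hpq.sub_one_mul_conj]

theorem dualMap_mul_self {p : ℝ} (hp : 0 < p) (x : ℝ → ℝ) (u : ℝ) :
    dualMap p x u * x u = |x u| ^ p := by
  unfold dualMap
  rcases eq_or_ne (x u) 0 with h | h
  · simp [h, Real.zero_rpow hp.ne']
  · have hs : Real.sign (x u) * x u = |x u| := by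
      rcases lt_or_gt_of_ne h with h | h
      · simp [Real.sign_of_neg h, abs_of_neg h]
      · simp [Real.sign_of_pos h, abs_of_pos h]
    rw [mul_assoc, hs, ← Real.rpow_add_one (abs_pos.2 h).ne', sub_add_cancel]

theorem memLp01_dualMap {p q : ℝ} (hpq : p.HolderConjugate q) {x : ℝ → ℝ} (hx : MemLp01 p x) :
    MemLp01 q (dualMap p x) := by
  refine ⟨measurable_dualMap p hx.1, ?_⟩
  simp only [abs_dualMap_rpow hpq]
  exact hx.2

theorem memLp01_dualFun {p q : ℝ} (hpq : p.HolderConjugate q) {x : ℝ → ℝ} (hx : MemLp01 p x) :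
    MemLp01 q (dualFun p q x) := by
  have h := memLp01_dualMap hpq hx
  refine memLp01_of_memLp hpq.symm.pos (h.1.div_const _) ?_
  change MemLp (fun u => dualMap p x u / (∫ t in (0:ℝ)..1, |x t| ^ p) ^ (1 / q)) _ _
  simpa only [div_eq_mul_inv] using
    (memLp_of_memLp01 hpq.symm.pos h).mul_const
      ((∫ t in (0:ℝ)..1, |x t| ^ p) ^ (1 / q))⁻¹

theorem pnorm_dualFun_le {p q : ℝ} (hpq : p.HolderConjugate q) (x : ℝ → ℝ) :
    pnorm q (dualFun p q x) ≤ 1 := by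
  have hN := integral_abs_rpow_nonneg p x
  have hq := hpq.symm.pos
  have e : ∀ u, |dualFun p q x u| ^ q = |x u| ^ p / ∫ t in (0:ℝ)..1, |x t| ^ p := by
    intro u
    unfold dualFun
    rw [abs_div, Real.div_rpow (abs_nonneg _) (abs_nonneg _), abs_dualMap_rpow hpq,
      abs_of_nonneg (Real.rpow_nonneg hN _), ← Real.rpow_mul hN, one_div_mul_cancel hq.ne',
      Real.rpow_one]
  unfold pnorm
  simp only [e, intervalIntegral.integral_div]
  exact Real.rpow_le_one (div_nonneg hN hN) (div_self_le_one _) (by positivity)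

theorem integral_mul_dualFun {p q : ℝ} (hpq : p.HolderConjugate q) (x : ℝ → ℝ) :
    ∫ u in (0:ℝ)..1, x u * dualFun p q x u = pnorm p x := by
  have e : ∀ u, x u * dualFun p q x u =
      |x u| ^ p / (∫ t in (0:ℝ)..1, |x t| ^ p) ^ (1 / q) := by
    intro u
    rw [← dualMap_mul_self hpq.pos, dualFun]
    ring
  have hp := hpq.pos
  simp only [e, intervalIntegral.integral_div, pnorm]
  rcases (integral_abs_rpow_nonneg p x).eq_or_lt with h | h
  · rw [← h, Real.zero_rpow (by positivity : 1 / p ≠ 0), zero_div]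
  · have h1 : 1 / p = 1 - 1 / q := by
      have := hpq.inv_add_inv_eq_one
      simp only [one_div]
      linarith
    rw [h1, Real.rpow_sub h, Real.rpow_one]

theorem pnorm_rpow {p : ℝ} (hp : 0 < p) (x : ℝ → ℝ) :
    pnorm p x ^ p = ∫ t in (0:ℝ)..1, |x t| ^ p := by
  rw [pnorm, ← Real.rpow_mul (integral_abs_rpow_nonneg p x), one_div_mul_cancel hp.ne',
    Real.rpow_one]

theorem integral_dualMap_mul_self {p : ℝ} (hp : 0 < p) (x : ℝ → ℝ) :
    ∫ u in (0:ℝ)..1, dualMap p x u * x u = ∫ t in (0:ℝ)..1, |x t| ^ p := by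
  simp only [dualMap_mul_self hp]

theorem gsip_self {p : ℝ} (hp : 0 < p) {x : ℝ → ℝ} (hx : 0 < pnorm p x) :
    gsip p x x = pnorm p x ^ 2 := by
  have h := integral_dualMap_mul_self hp x
  simp only [dualMap] at h
  rw [gsip, h, ← pnorm_rpow hp, ← Real.rpow_add hx, sub_add_cancel, Real.rpow_two]

theorem pnorm_pos {p : ℝ} (hp : 0 < p) {x : ℝ → ℝ} (hx : MemLp01 p x)
    (h0 : ¬ x =ᵐ[volume.restrict (Set.Ioc (0:ℝ) 1)] 0) : 0 < pnorm p x := by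
  refine Real.rpow_pos_of_pos (lt_of_le_of_ne (integral_abs_rpow_nonneg p x) fun h => h0 ?_) _
  have hi := (intervalIntegrable_iff_integrableOn_Ioc_of_le zero_le_one).1 hx.2
  rw [intervalIntegral.integral_of_le zero_le_one, eq_comm, integral_eq_zero_iff_of_nonneg
    (fun t => Real.rpow_nonneg (abs_nonneg _) _) hi] at h
  filter_upwards [h] with t ht
  exact abs_eq_zero.1 ((Real.rpow_eq_zero (abs_nonneg _) hp.ne').1 ht)

/-- Left `g`-orthogonality of `x₁` and `x₂°`, in terms of the duality map. -/
theorem integral_orth {p q : ℝ} (hpq : p.HolderConjugate q) {x₁ x₂ : ℝ → ℝ}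
    (h₁ : MemLp01 p x₁) (h₂ : MemLp01 p x₂) (hx : 0 < pnorm p x₁) :
    ∫ u in (0:ℝ)..1, dualMap p x₁ u * (x₂ u - gsip p x₁ x₂ / gsip p x₁ x₁ * x₁ u) = 0 := by
  have hJ := memLp01_dualMap hpq h₁
  have hI : (∫ u in (0:ℝ)..1, dualMap p x₁ u * x₁ u) ≠ 0 := by
    rw [integral_dualMap_mul_self hpq.pos, ← pnorm_rpow hpq.pos]
    exact (Real.rpow_pos_of_pos hx _).ne'
  have hc : gsip p x₁ x₂ / gsip p x₁ x₁ =
      (∫ u in (0:ℝ)..1, dualMap p x₁ u * x₂ u) / ∫ u in (0:ℝ)..1, dualMap p x₁ u * x₁ u :=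
    mul_div_mul_left _ _ (Real.rpow_pos_of_pos hx _).ne'
  rw [hc]
  simp only [mul_sub, mul_left_comm (dualMap p x₁ _)]
  rw [intervalIntegral.integral_sub (intervalIntegrable_mul hpq.symm hJ h₂)
      ((intervalIntegrable_mul hpq.symm hJ h₁).const_mul _),
    intervalIntegral.integral_const_mul, div_mul_cancel₀ _ hI, sub_self]

/-- for `1 < p < ∞`, `1/p + 1/q = 1`, and linearly independent
`x₁, x₂ ∈ L^p[0,1]`, one has
`V(x₁,x₂) = ‖x₁‖_p ‖x₂ − (g(x₁,x₂)/‖x₁‖_p²) x₁‖_p ≤ ‖x₁,x₂‖_p^G`. -/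
theorem stmt8 (p q : ℝ) (hp : 1 < p) (hpq : 1 / p + 1 / q = 1)
    (x₁ x₂ : ℝ → ℝ) (h₁ : MemLp01 p x₁) (h₂ : MemLp01 p x₂)
    (hli : ∀ a b : ℝ,
      (fun t => a * x₁ t + b * x₂ t) =ᵐ[volume.restrict (Set.Ioc (0:ℝ) 1)] 0 →
      a = 0 ∧ b = 0) :
    Vvol p x₁ x₂ =
      pnorm p x₁ * pnorm p (fun t => x₂ t - (gsip p x₁ x₂ / pnorm p x₁ ^ 2) * x₁ t) ∧
    Vvol p x₁ x₂ ≤ gahler q x₁ x₂ := by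
  have hc : p.HolderConjugate q := Real.holderConjugate_iff.2 ⟨hp, by simpa using hpq⟩
  have hx : 0 < pnorm p x₁ := pnorm_pos hc.pos h₁ fun h =>
    one_ne_zero (hli 1 0 (by simpa using h)).1
  refine ⟨by rw [Vvol, gsip_self hc.pos hx], ?_⟩
  have horth := integral_orth hc h₁ h₂ hx
  unfold Vvol
  set c := gsip p x₁ x₂ / gsip p x₁ x₁
  set z : ℝ → ℝ := fun t => x₂ t - c * x₁ t with hz
  have hzm : MemLp01 p z := memLp01_of_memLp hc.pos (h₂.1.sub (h₁.1.const_mul c))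
    ((memLp_of_memLp01 hc.pos h₂).sub ((memLp_of_memLp01 hc.pos h₁).const_mul c))
  have hy₁ := memLp01_dualFun hc h₁
  have hy₂ := memLp01_dualFun hc hzm
  refine le_csSup (bddAbove_gahlerSet hc h₁ h₂) ⟨dualFun p q x₁, dualFun p q z, hy₁, hy₂,
    pnorm_dualFun_le hc _, pnorm_dualFun_le hc _, ?_⟩
  -- Pairing with `x₂° = z` is linear, so the second column of the matrix can be reduced.
  have hlin : ∀ y : ℝ → ℝ, MemLp01 q y → ∫ u in (0:ℝ)..1, z u * y u =
      (∫ u in (0:ℝ)..1, x₂ u * y u) - c * ∫ u in (0:ℝ)..1, x₁ u * y u := by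
    intro y hy
    rw [← intervalIntegral.integral_const_mul, ← intervalIntegral.integral_sub
      (intervalIntegrable_mul hc h₂ hy) ((intervalIntegrable_mul hc h₁ hy).const_mul _)]
    congr 1
    ext u
    simp only [hz]
    ring
  have hzero : ∫ u in (0:ℝ)..1, z u * dualFun p q x₁ u = 0 := by
    have e : ∀ u, z u * dualFun p q x₁ u =
        dualMap p x₁ u * z u / (∫ t in (0:ℝ)..1, |x₁ t| ^ p) ^ (1 / q) := by
      intro u
      rw [dualFun]
      ring
    simp only [e, intervalIntegral.integral_div]
    rw [horth, zero_div]
  have e₁ := hlin _ hy₁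
  have e₂ := hlin _ hy₂
  rw [hzero, integral_mul_dualFun hc] at e₁
  rw [integral_mul_dualFun hc] at e₂
  rw [integral_mul_dualFun hc]
  set A := ∫ u in (0:ℝ)..1, x₂ u * dualFun p q x₁ u
  set B := ∫ u in (0:ℝ)..1, x₂ u * dualFun p q z u
  set C := ∫ u in (0:ℝ)..1, x₁ u * dualFun p q z u
  have : pnorm p x₁ * B - A * C = pnorm p x₁ * pnorm p z := by
    linear_combination pnorm p x₁ * (-e₂) + C * e₁
  rw [this, abs_of_nonneg (mul_nonneg hx.le (pnorm_nonneg _ _))]
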